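/- For every c : ℤ → 𝔽, the sequence u defined by u_k := ∑_{j∈ℤ} H_{k,j}·c_j (for each fixed k only finitely many terms are nonzero, namely those with 0 ≤ j < k or with j < 0 and k+1−n ≤ j) is the unique solution of the problem ∑_{l=0}^n a_l·u_{k+l} = c_k for all k ∈ ℤ together with the initial conditions u_j = 0 for j = 0, …, n−1. -/

import Mathlib

/-!
As a function of its first argument, `H̃(·, j)` solves the homogeneous recurrence (expand the
determinant along its first row), vanishes at `j + 1, …, j + n - 1` (two equal rows), equals `C_j`
at `j` and, by a cyclic permutation of rows, `(-1)^(n-1) C_{j+1}` at `j + n`. Inserting this into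
the recurrence at `k = j` gives `a_0 C_j = -(-1)^(n-1) a_n C_{j+1}`; since `C_0 = 1`, no `C_j`
vanishes.

Hence `H(·, j)` is the truncation of a homogeneous solution, to the right of `j` when `j ≥ 0` and
to the left of `j + n` when `j < 0`, and the truncation together with the normalisation gives
`S H(·, j) = δ_j`. In both cases `H(·, j)` vanishes on `0, …, n - 1`. Summing against `c` proves
that `u` is a solution. Uniqueness holds because a homogeneous solution which vanishes on one
window of length `n` vanishes on every window, as `a_0` and `a_n` are invertible.
-/

section Recurrence

variable {𝔽 : Type*} [Field 𝔽]

/-- The vanishing of a homogeneous solution on a window of length `n` propagates one step at a time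
to the right (dividing by `a n`) and to the left (dividing by `a 0`). -/
lemma eq_zero_of_recurrence (n : ℕ) (a : ℕ → 𝔽) (h0 : a 0 ≠ 0) (hn : a n ≠ 0) (w : ℤ → 𝔽)
    (hw : ∀ k : ℤ, ∑ l ∈ Finset.range (n + 1), a l * w (k + l) = 0)
    (hw0 : ∀ l : ℕ, l < n → w l = 0) (k : ℤ) : w k = 0 := by
  have key : ∀ k : ℤ, ∀ l : ℕ, l < n → w (k + l) = 0 := by
    intro k
    induction k using Int.induction_on with
    | zero => simpa using hw0
    | succ k ih =>
      intro l hl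
      rcases Nat.lt_or_ge (l + 1) n with h | h
      · have := ih (l + 1) h
        rwa [show (k : ℤ) + 1 + l = k + ((l + 1 : ℕ) : ℤ) by push_cast; ring]
      · have hln : l + 1 = n := by omega
        have h1 := hw k
        rw [Finset.sum_range_succ, Finset.sum_eq_zero, zero_add] at h1
        · rw [show (k : ℤ) + 1 + l = k + (n : ℤ) by rw [← hln]; push_cast; ring]
          exact (mul_eq_zero.mp h1).resolve_left hn
        · intro x hx
          rw [ih x (Finset.mem_range.mp hx), mul_zero]
    | pred k ih =>
      intro l hl
      rcases Nat.eq_zero_or_pos l with rfl | h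
      · have h1 := hw (-(k : ℤ) - 1)
        rw [Finset.sum_range_succ', Finset.sum_eq_zero, zero_add] at h1
        · exact (mul_eq_zero.mp h1).resolve_left h0
        · intro x hx
          rw [show -(k : ℤ) - 1 + ((x + 1 : ℕ) : ℤ) = -k + x by push_cast; ring,
            ih x (Finset.mem_range.mp hx), mul_zero]
      · obtain ⟨l, rfl⟩ : ∃ m, l = m + 1 := ⟨l - 1, by omega⟩
        rw [show -(k : ℤ) - 1 + ((l + 1 : ℕ) : ℤ) = -k + l by push_cast; ring]
        exact ih l (by omega)
  rcases Nat.eq_zero_or_pos n with rfl | hpos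
  · simpa [h0] using hw k
  · simpa using key k 0 hpos

/-- The determinant `H̃_{k,j}` of order `m + 1`: first row `y(k)`, followed by the rows
`y(j + 1), …, y(j + m)`. -/
def rowDet {m : ℕ} (y : Fin (m + 1) → ℤ → 𝔽) (k j : ℤ) : 𝔽 :=
  Matrix.det (Matrix.of fun r i : Fin (m + 1) =>
    if (r : ℕ) = 0 then y i k else y i (j + (r : ℕ)))

/-- The recurrence passes from the `y i` to `H̃(·, j)` by expansion along the first row. -/
lemma rowDet_recurrence {m : ℕ} (a : ℕ → 𝔽) (y : Fin (m + 1) → ℤ → 𝔽)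
    (hy : ∀ i (k : ℤ), ∑ l ∈ Finset.range (m + 1 + 1), a l * y i (k + l) = 0) (k j : ℤ) :
    ∑ l ∈ Finset.range (m + 1 + 1), a l * rowDet y (k + l) j = 0 := by
  have expand : ∃ q : Fin (m + 1) → 𝔽, ∀ k, rowDet y k j = ∑ i, q i * y i k := by
    refine ⟨fun i => (-1) ^ (i : ℕ) * Matrix.det (Matrix.of fun r s : Fin m =>
      y (i.succAbove s) (j + ((r : ℕ) + 1 : ℕ))), fun k => ?_⟩
    rw [rowDet, Matrix.det_succ_row_zero]
    refine Finset.sum_congr rfl fun i _ => ?_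
    have : (Matrix.submatrix (Matrix.of fun r i : Fin (m + 1) =>
        if (r : ℕ) = 0 then y i k else y i (j + (r : ℕ))) Fin.succ i.succAbove) =
        Matrix.of fun r s : Fin m => y (i.succAbove s) (j + ((r : ℕ) + 1 : ℕ)) := by
      ext r s
      simp
    rw [this]
    simp only [Matrix.of_apply, Fin.val_zero, if_true]
    ring
  obtain ⟨q, hq⟩ := expand
  simp only [hq, Finset.mul_sum]
  rw [Finset.sum_comm]
  refine Finset.sum_eq_zero fun i _ => ?_
  calc _ = q i * ∑ l ∈ Finset.range (m + 1 + 1), a l * y i (k + l) := by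
        rw [Finset.mul_sum]
        exact Finset.sum_congr rfl fun l _ => by ring
    _ = 0 := by rw [hy, mul_zero]

lemma rowDet_eq_zero {m : ℕ} (y : Fin (m + 1) → ℤ → 𝔽) (k j : ℤ) (h1 : j < k)
    (h2 : k ≤ j + m) : rowDet y k j = 0 := by
  obtain ⟨r, hr⟩ : ∃ r : ℕ, k = j + r := ⟨(k - j).toNat, by omega⟩
  have hr0 : r ≠ 0 := by omega
  refine Matrix.det_zero_of_row_eq (i := 0) (j := ⟨r, by omega⟩) ?_ ?_
  · intro h
    exact hr0 (congrArg Fin.val h).symm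
  · ext i
    simp [hr0, hr]

/-- Moving the first row of `H̃_{j+n,j}` to the bottom turns it into the Casoratian `C_{j+1}`. -/
lemma rowDet_shift {m : ℕ} (y : Fin (m + 1) → ℤ → 𝔽) (j : ℤ) :
    rowDet y (j + (m + 1 : ℕ)) j = (-1) ^ m * rowDet y (j + 1) (j + 1) := by
  have hM : rowDet y (j + 1) (j + 1) = (-1) ^ m * rowDet y (j + (m + 1 : ℕ)) j := by
    have h := Matrix.det_permute (finRotate (m + 1)) (Matrix.of fun r i : Fin (m + 1) =>
      if (r : ℕ) = 0 then y i (j + (m + 1 : ℕ)) else y i (j + (r : ℕ)))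
    rw [sign_finRotate] at h
    rw [rowDet, rowDet]
    push_cast at h ⊢
    rw [← h]
    congr 1
    ext r i
    simp only [Matrix.submatrix_apply, Matrix.of_apply, id]
    rcases eq_or_ne r (Fin.last m) with rfl | hr
    · rw [finRotate_last]
      rcases Nat.eq_zero_or_pos m with rfl | hm
      · simp
      · simp [hm.ne', add_assoc, add_comm (m : ℤ) 1]
    · rw [coe_finRotate_of_ne_last hr]
      by_cases h0 : (r : ℕ) = 0
      · simp [h0]
      · simp [h0, add_assoc, add_comm (1 : ℤ)]
  rw [hM, ← mul_assoc, ← mul_pow]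
  simp

lemma casoratian_step {m : ℕ} (a : ℕ → 𝔽) (y : Fin (m + 1) → ℤ → 𝔽)
    (hy : ∀ i (k : ℤ), ∑ l ∈ Finset.range (m + 1 + 1), a l * y i (k + l) = 0) (j : ℤ) :
    a 0 * rowDet y j j + a (m + 1) * ((-1) ^ m * rowDet y (j + 1) (j + 1)) = 0 := by
  have h := rowDet_recurrence a y hy j j
  rw [Finset.sum_range_succ, Finset.sum_range_succ', Finset.sum_eq_zero, zero_add,
    rowDet_shift] at h
  · simpa using h
  · intro l hl
    rw [rowDet_eq_zero, mul_zero]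
    · push_cast; omega
    · have := Finset.mem_range.mp hl
      push_cast; omega

lemma casoratian_ne_zero {m : ℕ} (a : ℕ → 𝔽) (h0 : a 0 ≠ 0) (hn : a (m + 1) ≠ 0)
    (y : Fin (m + 1) → ℤ → 𝔽)
    (hy : ∀ i (k : ℤ), ∑ l ∈ Finset.range (m + 1 + 1), a l * y i (k + l) = 0)
    (hinit : ∀ i j : Fin (m + 1), y i (j : ℤ) = if i = j then 1 else 0) (j : ℤ) :
    rowDet y j j ≠ 0 := by
  have hs : ((-1 : 𝔽)) ^ m ≠ 0 := pow_ne_zero _ (by simp)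
  induction j using Int.induction_on with
  | zero =>
    have : (Matrix.of fun r i : Fin (m + 1) =>
        if (r : ℕ) = 0 then y i 0 else y i (0 + (r : ℕ))) = (1 : Matrix _ _ 𝔽) := by
      ext r i
      have h := hinit i r
      by_cases hr : (r : ℕ) = 0
      · simp only [hr, Nat.cast_zero] at h
        simp [hr, h, Matrix.one_apply, eq_comm]
      · rw [Matrix.of_apply, if_neg hr, zero_add, h, Matrix.one_apply]
        simp only [eq_comm]
    rw [rowDet, this, Matrix.det_one]
    exact one_ne_zero
  | succ k ih =>
    intro h
    have := casoratian_step a y hy k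
    rw [h, mul_zero, mul_zero, add_zero] at this
    exact mul_ne_zero h0 ih this
  | pred k ih =>
    intro h
    have := casoratian_step a y hy (-(k : ℤ) - 1)
    rw [h, mul_zero, zero_add, sub_add_cancel] at this
    exact mul_ne_zero hn (mul_ne_zero hs ih) this

end Recurrence

/-- for every `c : ℤ → 𝔽`, the sequence `u_k := ∑_{j∈ℤ} H_{k,j} c_j`
(the sum is finite: the only possibly nonzero terms are those with `0 ≤ j < k` or with
`j < 0` and `k + 1 - n ≤ j`) is the unique solution of `∑_{l=0}^n a_l u_{k+l} = c_k`
for all `k ∈ ℤ` together with the initial conditions `u_j = 0` for `j = 0, …, n-1`. -/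
theorem stmt_10 {𝔽 : Type*} [Field 𝔽] (n : ℕ) (hn : 1 ≤ n) (a : ℕ → 𝔽)
    (ha : a 0 * a n ≠ 0) (y : Fin n → ℤ → 𝔽)
    (hy : ∀ (i : Fin n) (k : ℤ), ∑ l ∈ Finset.range (n + 1), a l * y i (k + l) = 0)
    (hinit : ∀ i j : Fin n, y i (j : ℤ) = if i = j then 1 else 0)
    (Htilde : ℤ → ℤ → 𝔽)
    (hHt : ∀ k j : ℤ, Htilde k j =
      Matrix.det (Matrix.of fun r i : Fin n =>
        if (r : ℕ) = 0 then y i k else y i (j + (r : ℕ))))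
    (C : ℤ → 𝔽) (hC : ∀ j : ℤ, C j = Htilde j j)
    (H : ℤ → ℤ → 𝔽)
    (hH : ∀ k j : ℤ, H k j =
      if 0 ≤ j ∧ j < k then (-1 : 𝔽) ^ (n - 1) * (a n * C (j + 1))⁻¹ * Htilde k j
      else if j < 0 ∧ k + 1 - (n : ℤ) ≤ j then (a 0 * C j)⁻¹ * Htilde k j
      else 0)
    (c : ℤ → 𝔽) (u : ℤ → 𝔽)
    (hu : ∀ k : ℤ, u k =
      (∑ j ∈ Finset.Ico (0 : ℤ) k, H k j * c j) +
      ∑ j ∈ Finset.Ico (k + 1 - (n : ℤ)) (0 : ℤ), H k j * c j) :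
    ((∀ k : ℤ, ∑ l ∈ Finset.range (n + 1), a l * u (k + l) = c k) ∧
      ∀ j : Fin n, u (j : ℤ) = 0) ∧
    ∀ v : ℤ → 𝔽,
      ((∀ k : ℤ, ∑ l ∈ Finset.range (n + 1), a l * v (k + l) = c k) ∧
        ∀ j : Fin n, v (j : ℤ) = 0) → v = u := by
  obtain ⟨m, rfl⟩ : ∃ m, n = m + 1 := ⟨n - 1, by omega⟩
  have h0 : a 0 ≠ 0 := left_ne_zero_of_mul ha
  have hn' : a (m + 1) ≠ 0 := right_ne_zero_of_mul ha
  have hT : ∀ k j, Htilde k j = rowDet y k j := hHt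
  simp only [hC, hT, Nat.add_sub_cancel] at hH
  have hCne := casoratian_ne_zero a h0 hn' y hy hinit
  have hzero_nonneg : ∀ k j : ℤ, 0 ≤ j → k ≤ j + m → H k j = 0 := by
    intro k j hj hk
    rw [hH]
    split_ifs with h1 h2
    · rw [rowDet_eq_zero y k j h1.2 hk, mul_zero]
    · omega
    · rfl
  have hzero_neg : ∀ k j : ℤ, j < 0 → j < k → H k j = 0 := by
    intro k j hj hk
    rw [hH]
    split_ifs with h1 h2
    · omega
    · rw [rowDet_eq_zero y k j hk (by push_cast at h2; omega), mul_zero]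
    · rfl
  -- Each column `H(·, j)` solves the recurrence with right-hand side the delta at `j`.
  have hdelta : ∀ k j : ℤ, ∑ l ∈ Finset.range (m + 1 + 1), a l * H (k + l) j =
      if k = j then 1 else 0 := by
    intro k j
    rcases lt_or_ge j 0 with hj | hj
    · rcases lt_trichotomy k j with hk | rfl | hk
      · rw [if_neg hk.ne]
        calc _ = (a 0 * rowDet y j j)⁻¹ *
              ∑ l ∈ Finset.range (m + 1 + 1), a l * rowDet y (k + l) j := by
              rw [Finset.mul_sum]
              refine Finset.sum_congr rfl fun l hl => ?_
              have := Finset.mem_range.mp hl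
              rw [hH, if_neg (by omega), if_pos ⟨hj, by push_cast; omega⟩]
              ring
          _ = 0 := by rw [rowDet_recurrence a y hy, mul_zero]
      · rw [if_pos rfl, Finset.sum_range_succ', Finset.sum_eq_zero, zero_add, hH,
          if_neg (by omega), if_pos ⟨hj, by push_cast; omega⟩]
        · have := hCne k
          simp only [Nat.cast_zero, add_zero]
          field_simp
        · intro l hl
          rw [hzero_neg _ _ hj (by push_cast; omega), mul_zero]
      · rw [if_neg hk.ne']
        refine Finset.sum_eq_zero fun l hl => ?_
        rw [hzero_neg _ _ hj (by omega), mul_zero]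
    · rcases lt_trichotomy k j with hk | rfl | hk
      · rw [if_neg hk.ne]
        refine Finset.sum_eq_zero fun l hl => ?_
        have := Finset.mem_range.mp hl
        rw [hzero_nonneg _ _ hj (by omega), mul_zero]
      · rw [if_pos rfl, Finset.sum_range_succ, Finset.sum_eq_zero, zero_add, hH,
          if_pos ⟨hj, by push_cast; omega⟩, rowDet_shift]
        · have := hCne (k + 1)
          have hs : ((-1 : 𝔽)) ^ m * (-1) ^ m = 1 := by rw [← mul_pow]; simp
          calc _ = ((-1 : 𝔽) ^ m * (-1) ^ m) * ((a (m + 1) * rowDet y (k + 1) (k + 1)) *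
                (a (m + 1) * rowDet y (k + 1) (k + 1))⁻¹) := by ring
            _ = 1 := by rw [hs, one_mul, mul_inv_cancel₀ (mul_ne_zero hn' this)]
        · intro l hl
          have := Finset.mem_range.mp hl
          rw [hzero_nonneg _ _ hj (by omega), mul_zero]
      · rw [if_neg hk.ne']
        calc _ = ((-1) ^ m * (a (m + 1) * rowDet y (j + 1) (j + 1))⁻¹) *
              ∑ l ∈ Finset.range (m + 1 + 1), a l * rowDet y (k + l) j := by
              rw [Finset.mul_sum]
              refine Finset.sum_congr rfl fun l hl => ?_
              rw [hH, if_pos ⟨hj, by omega⟩]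
              ring
          _ = 0 := by rw [rowDet_recurrence a y hy, mul_zero]
  -- The sum defining `u k` may be taken over any interval containing the support of `H(k, ·)`.
  have hsum : ∀ (A B k : ℤ), A ≤ 0 → A ≤ k - m → 0 ≤ B → k ≤ B →
      u k = ∑ j ∈ Finset.Ico A B, H k j * c j := by
    intro A B k hA hAk hB hkB
    rw [hu, ← Finset.Ico_union_Ico_eq_Ico hA hB,
      Finset.sum_union (Finset.Ico_disjoint_Ico_consecutive A 0 B), add_comm]
    congr 1
    · refine Finset.sum_subset (Finset.Ico_subset_Ico_left (by push_cast; omega)) ?_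
      intro j hj hj'
      simp only [Finset.mem_Ico] at hj hj'
      push_cast at hj'
      rw [hzero_neg k j (by omega) (by omega), zero_mul]
    · refine Finset.sum_subset (Finset.Ico_subset_Ico_right hkB) ?_
      intro j hj hj'
      simp only [Finset.mem_Ico] at hj hj'
      rw [hzero_nonneg k j (by omega) (by omega), zero_mul]
  have hsol : ∀ k : ℤ, ∑ l ∈ Finset.range (m + 1 + 1), a l * u (k + l) = c k := by
    intro k
    -- One interval serves all of `u k, …, u (k + n)` and contains `k`.
    set A : ℤ := -|k| - m with hAdef
    set B : ℤ := |k| + m + 1 with hBdef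
    have hk1 := le_abs_self k
    have hk2 := neg_abs_le k
    calc _ = ∑ l ∈ Finset.range (m + 1 + 1), ∑ j ∈ Finset.Ico A B, a l * H (k + l) j * c j := by
          refine Finset.sum_congr rfl fun l hl => ?_
          have := Finset.mem_range.mp hl
          rw [hsum A B (k + l) (by omega) (by omega) (by omega) (by omega), Finset.mul_sum]
          exact Finset.sum_congr rfl fun j _ => by ring
      _ = ∑ j ∈ Finset.Ico A B, (if k = j then 1 else 0) * c j := by
          rw [Finset.sum_comm]
          refine Finset.sum_congr rfl fun j _ => ?_
          rw [← Finset.sum_mul, hdelta]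
      _ = c k := by
          have : k ∈ Finset.Ico A B := Finset.mem_Ico.mpr ⟨by omega, by omega⟩
          simp only [ite_mul, one_mul, zero_mul, Finset.sum_ite_eq, if_pos this]
  have hui : ∀ j : Fin (m + 1), u (j : ℤ) = 0 := by
    intro i
    have hi := i.isLt
    rw [hu, Finset.sum_eq_zero, Finset.sum_eq_zero, add_zero]
    · intro j hj
      have := Finset.mem_Ico.mp hj
      rw [hzero_neg _ j this.2 (by omega), zero_mul]
    · intro j hj
      have := Finset.mem_Ico.mp hj
      rw [hzero_nonneg _ j this.1 (by omega), zero_mul]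
  refine ⟨⟨hsol, hui⟩, ?_⟩
  rintro v ⟨hv, hvi⟩
  funext k
  refine sub_eq_zero.mp (eq_zero_of_recurrence (m + 1) a h0 hn' (fun k => v k - u k) ?_ ?_ k)
  · intro k
    simp only [mul_sub, Finset.sum_sub_distrib, hv, hsol, sub_self]
  · intro l hl
    have h1 := hvi ⟨l, hl⟩
    have h2 := hui ⟨l, hl⟩
    simp only at h1 h2
    simp only [h1, h2, sub_self]
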